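/- Let S = {S_1,…,S_K} ⊂ ℂ^{d×d} and suppose there exists a θ-ergodic Borel probability measure μ_* on Σ_K^+ which is extremal for S and has full support, supp(μ_*) = Σ_K^+. Then S has the spectral finiteness property: there exist n ≥ 1 and a word (i_1,…,i_n) with ρ(S) = ρ(S_{i_1}⋯S_{i_n})^{1/n}. -/

import Mathlib

open Filter MeasureTheory Topology
open scoped ENNReal

noncomputable section

/-- The one-sided shift on `Σ_K^+ = ℕ → Fin K`. -/
def shift (K : ℕ) : (ℕ → Fin K) → ℕ → Fin K := fun i n => i (n + 1)

/-- The ordered product `S_{w 0} ⋯ S_{w (n-1)}` along a finite word `w`. -/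
def finWordProd {d K : ℕ} (S : Fin K → Matrix (Fin d) (Fin d) ℂ) {n : ℕ}
    (w : Fin n → Fin K) : Matrix (Fin d) (Fin d) ℂ :=
  (List.ofFn fun t => S (w t)).prod

/-- The ordered product of the first `n` matrices along an infinite sequence. -/
def wordProd {d K : ℕ} (S : Fin K → Matrix (Fin d) (Fin d) ℂ)
    (i : ℕ → Fin K) (n : ℕ) : Matrix (Fin d) (Fin d) ℂ :=
  (List.ofFn fun t : Fin n => S (i t)).prod

/-- The (usual) spectral radius of a complex matrix, as a real number. -/
def specRad {d : ℕ} (A : Matrix (Fin d) (Fin d) ℂ) : ℝ :=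
  (spectralRadius ℂ A).toReal

/-- The generalized spectral radius of a finite family of matrices. -/
def genSpecRad {d K : ℕ} (S : Fin K → Matrix (Fin d) (Fin d) ℂ) : ℝ :=
  Filter.atTop.limsup fun n : ℕ =>
    ⨆ w : Fin n → Fin K, specRad (finWordProd S w) ^ ((n : ℝ)⁻¹)

/-- A submultiplicative matrix norm on `d × d` complex matrices. -/
structure MatrixNorm (d : ℕ) where
  N : Matrix (Fin d) (Fin d) ℂ → ℝ
  nonneg : ∀ A, 0 ≤ N A
  definite : ∀ A, N A = 0 ↔ A = 0
  homog : ∀ (c : ℂ) (A), N (c • A) = ‖c‖ * N A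
  triangle : ∀ A B, N (A + B) ≤ N A + N B
  submult : ∀ A B, N (A * B) ≤ N A * N B

/-- `μ` is extremal for `S` (w.r.t. the matrix norm `N`). -/
def IsExtremal {d K : ℕ} (S : Fin K → Matrix (Fin d) (Fin d) ℂ)
    (N : Matrix (Fin d) (Fin d) ℂ → ℝ) (μ : Measure (ℕ → Fin K)) : Prop :=
  ∀ᵐ i ∂μ, Tendsto (fun n : ℕ => N (wordProd S i n) ^ ((n : ℝ)⁻¹))
    atTop (𝓝 (genSpecRad S))

/-- `x` is a density point of `μ`. -/
def DensityPoint {K : ℕ} (μ : Measure (ℕ → Fin K)) (x : ℕ → Fin K) : Prop :=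
  ∀ U : Set (ℕ → Fin K), IsOpen U → x ∈ U → 0 < μ U

/-- `S` has the spectral finiteness property. -/
def HasFinitenessProperty {d K : ℕ} (S : Fin K → Matrix (Fin d) (Fin d) ℂ) : Prop :=
  ∃ n : ℕ, 1 ≤ n ∧ ∃ w : Fin n → Fin K,
    genSpecRad S = specRad (finWordProd S w) ^ ((n : ℝ)⁻¹)

/-- `x` is periodic of period `π ≥ 1`. -/
def IsPeriodic {K : ℕ} (x : ℕ → Fin K) (π : ℕ) : Prop :=
  1 ≤ π ∧ ∀ n, x (n + π) = x n

/-!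
Suppose that `x` is a density point of period `n` with `ρ(S_{x_1} ⋯ S_{x_n}) < ρ(S) ^ n`, and
normalise so that `ρ(S) = 1`. The traces of all products are then bounded, and the seminorm
`sup_t |tr (t B)|`, with `t` running over the products, does not increase when `B` is multiplied by
a letter of `S`, while multiplication by a high power of `S_{x_1} ⋯ S_{x_n}` halves it. Matrices in
the generated algebra on which this seminorm vanishes lie in the Jacobson radical, which is
nilpotent, so the norm of a product is bounded by its seminorm up to a factor polynomial in the
length. Products of growth rate one along an orbit therefore allow only a vanishing frequency of
visits to a suitable cylinder around `x`. This holds almost everywhere for an extremal measure, so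
integrating the visit frequencies shows that the cylinder is null, contradicting the choice of `x`.
With full support, `x` can be any constant sequence.
-/

theorem exists_comp_comp_eq_self {k V W : Type*} [DivisionRing k] [AddCommGroup V] [Module k V]
    [AddCommGroup W] [Module k W] (f : V →ₗ[k] W) : ∃ g : W →ₗ[k] V, f ∘ₗ g ∘ₗ f = f := by
  obtain ⟨g, hg⟩ := f.rangeRestrict.exists_rightInverse_of_surjective f.range_rangeRestrict
  obtain ⟨g', rfl⟩ := LinearMap.exists_extend g
  exact ⟨g', LinearMap.ext fun v =>
    congrArg Subtype.val (LinearMap.congr_fun hg (f.rangeRestrict v))⟩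

section TraceForm

variable {k n : Type*} [Field k]

open Polynomial in
theorem exists_isIdempotentElem_aeval_mul_X {A : Type*} [Ring A] [Algebra k A] {a : A}
    (ha : IsIntegral k a) :
    ∃ f : k[X], IsIdempotentElem (aeval a (f * X)) ∧ (aeval a (f * X) = 0 → IsNilpotent a) := by
  obtain ⟨g, hg, hdvd⟩ :=
    exists_eq_pow_rootMultiplicity_mul_and_not_dvd (minpoly k a) (minpoly.ne_zero ha) 0
  set m := (minpoly k a).rootMultiplicity 0
  rw [map_zero, sub_zero] at hg hdvd
  have hzero : aeval a (X ^ (m + 1) * g) = 0 := by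
    rw [pow_succ', mul_assoc, ← hg, map_mul, minpoly.aeval, mul_zero]
  obtain ⟨p, q, hpq⟩ : IsCoprime (X ^ (m + 1)) g :=
    (irreducible_X.coprime_iff_not_dvd.2 hdvd).pow_left
  refine ⟨p * X ^ m, ?_, fun h => ⟨m + 1, ?_⟩⟩ <;> rw [mul_assoc, ← pow_succ] at *
  · have hsq : p * X ^ (m + 1) * (p * X ^ (m + 1)) =
        p * X ^ (m + 1) - p * q * (X ^ (m + 1) * g) := by
      linear_combination (p * X ^ (m + 1)) * hpq
    rw [IsIdempotentElem, ← map_mul, hsq, map_sub, map_mul _ (p * q), hzero, mul_zero, sub_zero]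
  · have hpow : (X : k[X]) ^ (m + 1) =
        X ^ (m + 1) * (p * X ^ (m + 1)) + q * (X ^ (m + 1) * g) := by
      linear_combination (-X ^ (m + 1)) * hpq
    rw [← aeval_X_pow (R := k) a, hpow, map_add, map_mul, h, map_mul _ q, hzero, mul_zero,
      mul_zero, add_zero]

variable [Fintype n] [DecidableEq n]

open Polynomial in
theorem isNilpotent_of_trace_aeval_mul_X_eq_zero [CharZero k] {A : Matrix n n k}
    (h : ∀ f : k[X], (aeval A (f * X)).trace = 0) : IsNilpotent A := by
  obtain ⟨f, hidem, hnil⟩ := exists_isIdempotentElem_aeval_mul_X A.isIntegral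
  refine hnil ((map_eq_zero_iff _ Matrix.toLinAlgEquiv'.injective).1 ?_)
  refine (LinearMap.IsIdempotentElem.trace_eq_zero_iff (hidem.map Matrix.toLinAlgEquiv')).1 ?_
  exact (Matrix.trace_toLin'_eq _).trans (h f)

theorem mem_jacobson_of_trace_mul_eq_zero [CharZero k] {A : Subalgebra k (Matrix n n k)} {X : A}
    (h : ∀ Y ∈ A, ((X : Matrix n n k) * Y).trace = 0) : X ∈ Ring.jacobson A := by
  rw [← Ideal.jacobson_bot, Ideal.mem_jacobson_iff]
  intro Y
  have hnil : IsNilpotent (A.val (Y * X)) := by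
    refine isNilpotent_of_trace_aeval_mul_X_eq_zero fun f => ?_
    rw [Polynomial.aeval_algHom_apply A.val, map_mul, Polynomial.aeval_X, ← mul_assoc, map_mul,
      Matrix.trace_mul_comm]
    exact h _ (Polynomial.aeval (Y * X) f * Y).2
  obtain ⟨u, hu⟩ := ((IsNilpotent.map_iff Subtype.val_injective).1 hnil).isUnit_add_one
  refine ⟨↑u⁻¹, ?_⟩
  rw [mul_assoc, ← mul_add_one, ← hu, Units.inv_mul, sub_self]
  exact zero_mem _

/-- The trace form of the algebra generated by `M` may be degenerate, so `e` is dual to `s` only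
modulo its radical. -/
theorem exists_trace_dual_family (M : Submonoid (Matrix n n k)) :
    ∃ s : Finset (Matrix n n k), (∀ t ∈ s, t ∈ M) ∧
      ∃ e : s → Algebra.adjoin k (M : Set (Matrix n n k)),
        ∀ X ∈ Algebra.adjoin k (M : Set (Matrix n n k)),
        ∀ Y ∈ Algebra.adjoin k (M : Set (Matrix n n k)),
          ((X - ∑ j, (X * j).trace • (e j : Matrix n n k)) * Y).trace = 0 := by
  classical
  set A := Algebra.adjoin k (M : Set (Matrix n n k))
  obtain ⟨s, hsM, hspan⟩ := (Submodule.fg_span_iff_fg_span_finset_subset (M : Set (Matrix n n k))).1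
    (IsNoetherian.noetherian (Submodule.span k (M : Set (Matrix n n k))))
  have hA : A.toSubmodule = Submodule.span k (s : Set (Matrix n n k)) := by
    rw [Algebra.adjoin_eq_span, Submonoid.closure_eq, hspan]
  let T : A →ₗ[k] s → k := LinearMap.pi fun j =>
    Matrix.traceLinearMap n k k ∘ₗ LinearMap.mulRight k (j : Matrix n n k) ∘ₗ A.val.toLinearMap
  obtain ⟨g, hg⟩ := exists_comp_comp_eq_self T
  refine ⟨s, fun t ht => hsM ht, fun j => g fun i => if j = i then 1 else 0, fun X hX Y hY => ?_⟩
  have hgT : (g (T ⟨X, hX⟩) : Matrix n n k) =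
      ∑ j, (X * j).trace • (g fun i => if j = i then 1 else 0 : Matrix n n k) := by
    rw [LinearMap.pi_apply_eq_sum_univ g, AddSubmonoidClass.coe_finsetSum]
    rfl
  rw [← hgT]
  rw [← Subalgebra.mem_toSubmodule, hA] at hY
  induction hY using Submodule.span_induction with
  | mem t ht =>
    rw [sub_mul, Matrix.trace_sub, sub_eq_zero]
    exact (congrFun (LinearMap.congr_fun hg ⟨X, hX⟩) ⟨t, ht⟩).symm
  | zero => simp
  | add Y Z _ _ hY hZ => rw [mul_add, Matrix.trace_add, hY, hZ, add_zero]
  | smul c Y _ hY => rw [mul_smul_comm, Matrix.trace_smul, hY, smul_zero]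

end TraceForm

section TraceBound

variable {𝕜 n : Type*} [NormedField 𝕜] [Fintype n]

/-- `z` bounds the seminorm `sup_{t ∈ M} |tr (t B)|` of the matrix `B`. -/
def HasTraceBound [DecidableEq n] (M : Submonoid (Matrix n n 𝕜)) (B : Matrix n n 𝕜) (z : ℝ) :
    Prop :=
  ∀ t ∈ M, ‖(t * B).trace‖ ≤ z

variable [DecidableEq n] {M : Submonoid (Matrix n n 𝕜)} {A B X U : Matrix n n 𝕜} {w y z : ℝ}

namespace HasTraceBound

theorem nonneg (h : HasTraceBound M B z) : 0 ≤ z :=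
  (norm_nonneg _).trans (h 1 M.one_mem)

theorem zero : HasTraceBound M 0 0 := fun t _ => by simp

theorem add (hA : HasTraceBound M A y) (hB : HasTraceBound M B z) :
    HasTraceBound M (A + B) (y + z) := fun t ht => by
  rw [mul_add, Matrix.trace_add]
  exact norm_add_le_of_le (hA t ht) (hB t ht)

theorem smul (c : 𝕜) (h : HasTraceBound M B z) : HasTraceBound M (c • B) (‖c‖ * z) :=
  fun t ht => by
    rw [mul_smul_comm, Matrix.trace_smul, norm_smul]
    exact mul_le_mul_of_nonneg_left (h t ht) (norm_nonneg c)

theorem mul_of_mem (hX : X ∈ M) (h : HasTraceBound M B z) : HasTraceBound M (X * B) z :=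
  fun t ht => by
    rw [← mul_assoc]
    exact h _ (M.mul_mem ht hX)

theorem exists_mul_of_mem_adjoin (hX : X ∈ Algebra.adjoin 𝕜 (M : Set (Matrix n n 𝕜))) :
    ∃ C, 0 ≤ C ∧ ∀ B z, HasTraceBound M B z → HasTraceBound M (X * B) (C * z) := by
  rw [← Subalgebra.mem_toSubmodule, Algebra.adjoin_eq_span, Submonoid.closure_eq] at hX
  induction hX using Submodule.span_induction with
  | mem X hX => exact ⟨1, zero_le_one, fun B z h => by simpa using h.mul_of_mem hX⟩
  | zero => exact ⟨0, le_rfl, fun B z _ => by simpa using zero⟩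
  | add X Y _ _ hX hY =>
    obtain ⟨C, hC, hX⟩ := hX
    obtain ⟨D, hD, hY⟩ := hY
    exact ⟨C + D, add_nonneg hC hD, fun B z h => by
      simpa only [add_mul] using (hX B z h).add (hY B z h)⟩
  | smul c X _ hX =>
    obtain ⟨C, hC, hX⟩ := hX
    exact ⟨‖c‖ * C, by positivity, fun B z h => by
      simpa only [smul_mul_assoc, mul_assoc] using (hX B z h).smul c⟩

end HasTraceBound

/-- Left multiplication by `X` multiplies the seminorm `sup_{t ∈ M} |tr (t B)|` by at most `w`
for `B ∈ M`. -/
def ContractsTraces (M : Submonoid (Matrix n n 𝕜)) (X : Matrix n n 𝕜) (w : ℝ) : Prop :=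
  ∀ B ∈ M, ∀ z, HasTraceBound M B z → HasTraceBound M (X * B) (w * z)

theorem contractsTraces_one_of_mem (hX : X ∈ M) : ContractsTraces M X 1 :=
  fun B _ z h => by simpa using h.mul_of_mem hX

theorem hasTraceBound_list_prod {ι : Type*} {W : ι → Matrix n n 𝕜} {w : ι → ℝ}
    (hWM : ∀ x, W x ∈ M) (hW : ∀ x, ContractsTraces M (W x) (w x)) (h : HasTraceBound M 1 z)
    (l : List ι) : HasTraceBound M (l.map W).prod ((l.map w).prod * z) := by
  induction l with
  | nil => simpa using h
  | cons x l ih =>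
    simp only [List.map_cons, List.prod_cons, mul_assoc]
    exact hW x _ (M.list_prod_mem (List.forall_mem_map.2 fun x _ => hWM x)) _ ih

theorem eventually_contractsTraces_pow (hU : U ∈ M)
    (hlim : Tendsto (fun k : ℕ => U ^ k) atTop (𝓝 0)) {ε : ℝ} (hε : 0 < ε) :
    ∀ᶠ k : ℕ in atTop, ContractsTraces M (U ^ k) ε := by
  obtain ⟨s, -, e, hdual⟩ := exists_trace_dual_family M
  choose C _ hCe using fun j => HasTraceBound.exists_mul_of_mem_adjoin (e j).2
  have hsmall : Tendsto (fun k : ℕ => ∑ j, ‖(U ^ k * j).trace‖ * C j) atTop (𝓝 0) := by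
    have hcont : Continuous fun A : Matrix n n 𝕜 => ∑ j : s, ‖(A * j).trace‖ * C j := by fun_prop
    simpa [Function.comp_def] using (hcont.tendsto 0).comp hlim
  filter_upwards [hsmall.eventually_le_const hε] with k hk B hB z hz t ht
  have hexpand : (t * (U ^ k * B)).trace =
      ∑ j, (U ^ k * j).trace * (t * (e j * B)).trace := by
    have h := hdual _ (Algebra.subset_adjoin (pow_mem hU k)) _
      (Algebra.subset_adjoin (mul_mem hB ht))
    rw [sub_mul, Matrix.trace_sub, sub_eq_zero, Finset.sum_mul, Matrix.trace_sum] at h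
    rw [Matrix.trace_mul_comm, mul_assoc, h]
    refine Finset.sum_congr rfl fun j _ => ?_
    rw [smul_mul_assoc, Matrix.trace_smul, smul_eq_mul, Matrix.trace_mul_comm t, mul_assoc]
  calc ‖(t * (U ^ k * B)).trace‖
      ≤ ∑ j, ‖(U ^ k * j).trace‖ * (C j * z) := by
        rw [hexpand]
        refine norm_sum_le_of_le _ fun j _ => ?_
        rw [norm_mul]
        exact mul_le_mul_of_nonneg_left (hCe j B z hz t ht) (norm_nonneg _)
    _ = (∑ j, ‖(U ^ k * j).trace‖ * C j) * z := by simp only [Finset.sum_mul, mul_assoc]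
    _ ≤ ε * z := mul_le_mul_of_nonneg_right hk hz.nonneg

open scoped Matrix.Norms.Operator in
theorem exists_mem_jacobson_norm_sub_le [CharZero 𝕜] (M : Submonoid (Matrix n n 𝕜)) :
    ∃ C, 0 ≤ C ∧ ∀ (X : Algebra.adjoin 𝕜 (M : Set (Matrix n n 𝕜))) (z : ℝ),
      HasTraceBound M (X : Matrix n n 𝕜) z →
        ∃ r ∈ Ring.jacobson (Algebra.adjoin 𝕜 (M : Set (Matrix n n 𝕜))), ‖X - r‖ ≤ C * z := by
  obtain ⟨s, hs, e, hdual⟩ := exists_trace_dual_family M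
  refine ⟨∑ j, ‖e j‖, by positivity, fun X z hX =>
    ⟨X - ∑ j, ((X : Matrix n n 𝕜) * j).trace • e j, mem_jacobson_of_trace_mul_eq_zero ?_, ?_⟩⟩
  · simpa using hdual X X.2
  · rw [sub_sub_cancel, Finset.sum_mul]
    refine norm_sum_le_of_le _ fun j _ => (norm_smul_le _ _).trans ?_
    rw [mul_comm, Matrix.trace_mul_comm]
    exact mul_le_mul_of_nonneg_left (hX _ (hs j j.2)) (norm_nonneg _)

end TraceBound

theorem add_mul_sum_range_pow_le {a b c C : ℝ} (ha : 0 ≤ a) (hb : 0 ≤ b) (hc : 0 ≤ c)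
    (hC : 0 ≤ C) (n i : ℕ) :
    a + b * (∑ j ∈ Finset.range n, C * ((j : ℝ) + 1) ^ i) + c * (C * ((n : ℝ) + 1) ^ i) ≤
      (a + b * C + c * C) * ((n : ℝ) + 1) ^ (i + 1) := by
  have hone : (1 : ℝ) ≤ ((n : ℝ) + 1) ^ (i + 1) := one_le_pow₀ (by simp)
  have hpow : ((n : ℝ) + 1) ^ i ≤ ((n : ℝ) + 1) ^ (i + 1) := pow_le_pow_right₀ (by simp) i.le_succ
  have hsum : ∑ j ∈ Finset.range n, C * ((j : ℝ) + 1) ^ i ≤ C * ((n : ℝ) + 1) ^ (i + 1) := by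
    have hterm : ∀ j ∈ Finset.range n, C * ((j : ℝ) + 1) ^ i ≤ C * ((n : ℝ) + 1) ^ i :=
      fun j hj => by
        have := (Finset.mem_range.1 hj).le
        gcongr
    calc _ ≤ n * (C * ((n : ℝ) + 1) ^ i) := by
          simpa using Finset.sum_le_card_nsmul _ _ _ hterm
      _ ≤ (n + 1) * (C * ((n : ℝ) + 1) ^ i) := by gcongr; simp
      _ = C * ((n : ℝ) + 1) ^ (i + 1) := by ring
  calc _ ≤ a * ((n : ℝ) + 1) ^ (i + 1) + b * (C * ((n : ℝ) + 1) ^ (i + 1)) +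
        c * (C * ((n : ℝ) + 1) ^ (i + 1)) := by
        gcongr
        exact le_mul_of_one_le_right ha hone
    _ = _ := by ring

section NilpotentIdeal

variable {R α : Type*} [SeminormedRing R] {I : Ideal R} [I.IsTwoSided] {W : α → R} {w : α → ℝ}
  {r : List α → R} {A β : ℝ} {g : ℕ → ℝ}

theorem norm_mul_sub_mul_list_prod_le (hw : ∀ x, 0 ≤ w x) (hW : ∀ x, ‖W x‖ ≤ β * w x)
    (hrI : ∀ l, r l ∈ I) (hr : ∀ l, ‖(l.map W).prod - r l‖ ≤ A * (l.map w).prod) {X : R}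
    (hX : ∀ a ∈ I, ∀ l : List α, ‖X * a * (l.map W).prod‖ ≤ ‖X * a‖ * (g l.length * (l.map w).prod))
    (hg : ∀ n, 0 ≤ g n) (u v : List α) :
    ‖X * ((u.map W).prod - r u) * (v.map W).prod‖ ≤
      ‖X‖ * ((A + A * (β + 1) * ∑ j ∈ Finset.range v.length, g j) *
        ((u.map w).prod * (v.map w).prod)) := by
  have hw' (l : List α) : 0 ≤ (l.map w).prod := List.prod_nonneg (by simpa using fun x _ => hw x)
  induction v generalizing u with
  | nil => simpa using norm_mul_le_of_le le_rfl (hr u)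
  | cons x v ih =>
    set y := (u.map W).prod - r u
    set y' := ((u ++ [x]).map W).prod - r (u ++ [x])
    have hmem : y * W x - y' ∈ I := by
      have hyy' : y * W x - y' = r (u ++ [x]) - r u * W x := by
        simp only [y, y', List.map_append, List.prod_append, List.map_singleton,
          List.prod_singleton]
        noncomm_ring
      rw [hyy']
      exact I.sub_mem (hrI _) (I.mul_mem_right _ (hrI u))
    have hnorm : ‖y * W x - y'‖ ≤ A * (β + 1) * ((u.map w).prod * w x) := by
      refine (norm_sub_le_of_le (norm_mul_le_of_le (hr u) (hW x)) (hr (u ++ [x]))).trans_eq ?_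
      rw [List.map_append, List.prod_append, List.map_singleton, List.prod_singleton]
      ring
    have hsplit : X * y * ((x :: v).map W).prod =
        X * y' * (v.map W).prod + X * (y * W x - y') * (v.map W).prod := by
      rw [List.map_cons, List.prod_cons]
      noncomm_ring
    have hcorr : ‖X * (y * W x - y') * (v.map W).prod‖ ≤
        ‖X‖ * (A * (β + 1) * ((u.map w).prod * w x)) * (g v.length * (v.map w).prod) :=
      (hX _ hmem v).trans (mul_le_mul_of_nonneg_right (norm_mul_le_of_le le_rfl hnorm)
        (mul_nonneg (hg _) (hw' v)))
    rw [hsplit, List.length_cons, Finset.sum_range_succ, List.map_cons, List.prod_cons]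
    refine (norm_add_le_of_le (ih (u ++ [x])) hcorr).trans_eq ?_
    simp only [List.map_append, List.prod_append, List.map_singleton, List.prod_singleton]
    ring

theorem norm_mul_list_prod_le (hw : ∀ x, 0 ≤ w x) (hW : ∀ x, ‖W x‖ ≤ β * w x)
    (hrI : ∀ l, r l ∈ I) (hr : ∀ l, ‖(l.map W).prod - r l‖ ≤ A * (l.map w).prod) {X : R}
    (hX : ∀ a ∈ I, ∀ l : List α, ‖X * a * (l.map W).prod‖ ≤ ‖X * a‖ * (g l.length * (l.map w).prod))
    (hg : ∀ n, 0 ≤ g n) (l : List α) :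
    ‖X * (l.map W).prod‖ ≤ ‖X‖ * ((A + A * (β + 1) * (∑ j ∈ Finset.range l.length, g j) +
      ‖r []‖ * g l.length) * (l.map w).prod) := by
  have hw' : 0 ≤ (l.map w).prod := List.prod_nonneg (by simpa using fun x _ => hw x)
  have hsplit : X * (l.map W).prod =
      X * (1 - r []) * (l.map W).prod + X * r [] * (l.map W).prod := by noncomm_ring
  have hmain := norm_mul_sub_mul_list_prod_le hw hW hrI hr hX hg [] l
  rw [List.map_nil, List.map_nil, List.prod_nil, List.prod_nil, one_mul] at hmain
  have hrem : ‖X * r [] * (l.map W).prod‖ ≤ ‖X‖ * ‖r []‖ * (g l.length * (l.map w).prod) :=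
    (hX _ (hrI []) l).trans (mul_le_mul_of_nonneg_right (norm_mul_le _ _)
      (mul_nonneg (hg _) hw'))
  rw [hsplit]
  exact (norm_add_le_of_le hmain hrem).trans_eq (by ring)

/-- Replacing the prefixes of a product by their small representatives modulo `I`, one letter at a
time, leaves an error in `I` at each letter. By descending induction on the power of `I` that
contains a left factor, each power of `I` thus costs one more factor of the length. -/
theorem exists_norm_list_prod_le_of_nilpotent {m : ℕ} (hI : I ^ m = ⊥) (hβ : 0 ≤ β)
    (hw : ∀ x, 0 ≤ w x) (hW : ∀ x, ‖W x‖ ≤ β * w x)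
    (hr : ∀ l : List α, ∃ r ∈ I, ‖(l.map W).prod - r‖ ≤ A * (l.map w).prod) :
    ∃ C, ∀ l : List α, ‖(l.map W).prod‖ ≤ C * (l.length + 1) ^ m * (l.map w).prod := by
  choose r hrI hr using hr
  have hA : 0 ≤ A := by simpa using (norm_nonneg _).trans (hr [])
  have hw' (l : List α) : 0 ≤ (l.map w).prod := List.prod_nonneg (by simpa using fun x _ => hw x)
  have key : ∀ i ≤ m, ∃ C, 0 ≤ C ∧ ∀ X ∈ I ^ (m - i), ∀ l : List α,
      ‖X * (l.map W).prod‖ ≤ ‖X‖ * (C * (l.length + 1) ^ i * (l.map w).prod) := by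
    intro i
    induction i with
    | zero =>
      refine fun _ => ⟨0, le_rfl, fun X hX l => ?_⟩
      rw [Nat.sub_zero, hI, Ideal.mem_bot] at hX
      simp [hX]
    | succ i ih =>
      intro hi
      obtain ⟨C, hC, h⟩ := ih (by omega)
      refine ⟨A + A * (β + 1) * C + ‖r []‖ * C, by positivity, fun X hX l => ?_⟩
      have hX' : ∀ a ∈ I, X * a ∈ I ^ (m - i) := fun a ha => by
        rw [show m - i = m - (i + 1) + 1 by omega, Ideal.IsTwoSided.pow_add, Submodule.pow_one]
        exact Ideal.mul_mem_mul hX ha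
      refine (norm_mul_list_prod_le (g := fun j => C * ((j : ℝ) + 1) ^ i) hw hW hrI hr
        (fun a ha => h _ (hX' a ha)) (fun j => by positivity) l).trans ?_
      exact mul_le_mul_of_nonneg_left (mul_le_mul_of_nonneg_right (add_mul_sum_range_pow_le hA
        (by positivity) (norm_nonneg _) hC l.length i) (hw' l)) (norm_nonneg X)
  obtain ⟨C, -, h⟩ := key m le_rfl
  refine ⟨‖(1 : R)‖ * C, fun l => ?_⟩
  have hone : (1 : R) ∈ I ^ (m - m) := by
    rw [Nat.sub_self, Submodule.pow_zero, Ideal.one_eq_top]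
    trivial
  simpa only [one_mul, mul_assoc] using h 1 hone l

end NilpotentIdeal

open scoped Matrix.Norms.Operator in
theorem exists_norm_list_prod_le_of_contractsTraces {𝕜 n α : Type*} [NormedField 𝕜] [CharZero 𝕜]
    [Fintype n] [DecidableEq n] {M : Submonoid (Matrix n n 𝕜)} {z β : ℝ}
    (hz : HasTraceBound M 1 z) {W : α → Matrix n n 𝕜} {w : α → ℝ} (hWM : ∀ x, W x ∈ M)
    (hWc : ∀ x, ContractsTraces M (W x) (w x)) (hβ : 0 ≤ β) (hw : ∀ x, 0 ≤ w x)
    (hW : ∀ x, ‖W x‖ ≤ β * w x) :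
    ∃ (C : ℝ) (m : ℕ), ∀ l : List α,
      ‖(l.map W).prod‖ ≤ C * (l.length + 1) ^ m * (l.map w).prod := by
  set A := Algebra.adjoin 𝕜 (M : Set (Matrix n n 𝕜))
  have : IsArtinianRing A := .of_finite 𝕜 A
  obtain ⟨m, hm⟩ := IsSemiprimaryRing.isNilpotent (R := A)
  obtain ⟨C, -, hC⟩ := exists_mem_jacobson_norm_sub_le M
  let W' (x : α) : A := ⟨W x, Algebra.subset_adjoin (hWM x)⟩
  have hcoe (l : List α) : ((l.map W').prod : Matrix n n 𝕜) = (l.map W).prod := by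
    rw [← A.coe_val, map_list_prod, List.map_map]
    rfl
  obtain ⟨C', hC'⟩ := exists_norm_list_prod_le_of_nilpotent (W := W') (A := C * z) hm hβ hw hW
    fun l => by
      rw [mul_assoc, mul_comm z]
      exact hC _ _ (hcoe l ▸ hasTraceBound_list_prod hWM hWc hz l)
  exact ⟨C', m, fun l => hcoe l ▸ hC' l⟩

section BirkhoffAverage

variable {Ω E : Type*} [MeasurableSpace Ω] [NormedAddCommGroup E] [NormedSpace ℝ E]
  {μ : Measure Ω} {T : Ω → Ω} {f g : Ω → E}

theorem integral_birkhoffAverage (hT : MeasurePreserving T μ μ) (hf : Integrable f μ) {n : ℕ}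
    (hn : n ≠ 0) : ∫ x, birkhoffAverage ℝ T f n x ∂μ = ∫ x, f x ∂μ := by
  have hint (j : ℕ) : ∫ x, f (T^[j] x) ∂μ = ∫ x, f x ∂μ := by
    have hTj := hT.iterate j
    rw [← integral_map hTj.aemeasurable (hTj.map_eq.symm ▸ hf.aestronglyMeasurable), hTj.map_eq]
  simp only [birkhoffAverage, birkhoffSum]
  have hsum := integral_finsetSum (Finset.range n)
    fun j _ => (hT.iterate j).integrable_comp_of_integrable hf
  simp only [Function.comp_apply] at hsum
  rw [integral_smul, hsum,
    Finset.sum_congr rfl fun j _ => hint j, Finset.sum_const, Finset.card_range,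
    ← Nat.cast_smul_eq_nsmul ℝ, inv_smul_smul₀ (Nat.cast_ne_zero.2 hn)]

theorem norm_birkhoffAverage_le {α : Type*} {T : α → α} {f : α → E} {b : ℝ} (hb : 0 ≤ b)
    (hf : ∀ x, ‖f x‖ ≤ b) (n : ℕ) (x : α) : ‖birkhoffAverage ℝ T f n x‖ ≤ b := by
  rw [birkhoffAverage, birkhoffSum, norm_smul, norm_inv, RCLike.norm_natCast]
  refine inv_mul_le_of_le_mul₀ n.cast_nonneg hb ?_
  simpa using norm_sum_le_of_le (Finset.range n) fun j _ => hf (T^[j] x)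

theorem integral_eq_of_tendsto_birkhoffAverage [IsFiniteMeasure μ]
    (hT : MeasurePreserving T μ μ) (hf : AEStronglyMeasurable f μ) {b : ℝ}
    (hb : ∀ x, ‖f x‖ ≤ b)
    (hfg : ∀ᵐ x ∂μ, Tendsto (fun n => birkhoffAverage ℝ T f n x) atTop (𝓝 (g x))) :
    ∫ x, f x ∂μ = ∫ x, g x ∂μ := by
  rcases isEmpty_or_nonempty Ω with _ | ⟨⟨x⟩⟩
  · simp [μ.eq_zero_of_isEmpty]
  have hint : Integrable f μ := .of_bound hf b (.of_forall hb)
  have hmeas (n : ℕ) : AEStronglyMeasurable (birkhoffAverage ℝ T f n) μ :=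
    (Finset.aestronglyMeasurable_fun_sum _ fun j _ =>
      hf.comp_measurePreserving (hT.iterate j)).const_smul _
  refine tendsto_nhds_unique (tendsto_const_nhds.congr' ?_)
    (tendsto_integral_of_dominated_convergence (fun _ => b) hmeas (integrable_const b)
      (fun n => .of_forall (norm_birkhoffAverage_le ((norm_nonneg _).trans (hb x)) hb n)) hfg)
  filter_upwards [eventually_ne_atTop 0] with n hn
  exact (integral_birkhoffAverage hT hint hn).symm

end BirkhoffAverage

theorem tendsto_mul_pow_rpow_inv_natCast {C : ℝ} (hC : 0 < C) (m : ℕ) :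
    Tendsto (fun n : ℕ => (C * ((n : ℝ) + 1) ^ m) ^ (n : ℝ)⁻¹) atTop (𝓝 1) := by
  have hconst : Tendsto (fun n : ℕ => C ^ (n : ℝ)⁻¹) atTop (𝓝 1) := by
    simpa using tendsto_const_nhds.rpow (tendsto_inv_atTop_nhds_zero_nat (𝕜 := ℝ)) (.inl hC.ne')
  have hpow : Tendsto (fun n : ℕ => ((n : ℝ) + 1) ^ ((m : ℝ) / n)) atTop (𝓝 1) := by
    simpa [Function.comp_def] using (tendsto_rpow_div_mul_add m 1 (-1) zero_ne_one).comp
      (tendsto_natCast_atTop_atTop.atTop_add tendsto_const_nhds :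
        Tendsto (fun n : ℕ => (n : ℝ) + 1) atTop atTop)
  refine (mul_one (1 : ℝ) ▸ hconst.mul hpow).congr fun n => ?_
  rw [Real.mul_rpow hC.le (by positivity), ← Real.rpow_natCast, ← Real.rpow_mul (by positivity),
    div_eq_mul_inv]

theorem tendsto_div_of_le_mul_half_rpow {a v : ℕ → ℝ} {C : ℝ} {m : ℕ} (ha : ∀ n, 0 ≤ a n)
    (hv : ∀ n, 0 ≤ v n) (hlim : Tendsto (fun n : ℕ => a n ^ (n : ℝ)⁻¹) atTop (𝓝 1))
    (hle : ∀ n, a n ≤ C * (n + 1) ^ m * (1 / 2) ^ v n) :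
    Tendsto (fun n => v n / n) atTop (𝓝 0) := by
  have hC : 0 < C := by
    obtain ⟨n, hn, hn0⟩ := ((hlim.eventually_ne one_ne_zero).and (eventually_ne_atTop 0)).exists
    have han : 0 < a n := (ha n).lt_of_ne' fun h =>
      hn (by rw [h, Real.zero_rpow (inv_ne_zero (Nat.cast_ne_zero.2 hn0))])
    have := han.trans_le (hle n)
    rw [mul_assoc] at this
    exact pos_of_mul_pos_left this (by positivity)
  have hhalf : Tendsto (fun n : ℕ => (1 / 2 : ℝ) ^ (v n / n)) atTop (𝓝 1) := by
    refine tendsto_of_tendsto_of_tendsto_of_le_of_le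
      (by simpa using hlim.div (tendsto_mul_pow_rpow_inv_natCast hC m) one_ne_zero)
      tendsto_const_nhds (fun n => ?_) fun n =>
        Real.rpow_le_one (by norm_num) (by norm_num) (div_nonneg (hv n) n.cast_nonneg)
    refine div_le_of_le_mul₀ (by positivity) (by positivity) ?_
    dsimp only
    rw [mul_comm, div_eq_mul_inv (v n), Real.rpow_mul (by norm_num),
      ← Real.mul_rpow (by positivity) (by positivity)]
    exact Real.rpow_le_rpow (ha n) (hle n) (by positivity)
  have hlogb := (hhalf.log one_ne_zero).div_const (Real.log (1 / 2))
  rw [Real.log_one, zero_div] at hlogb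
  refine hlogb.congr fun n => ?_
  rw [Real.log_rpow (by norm_num), mul_div_cancel_right₀ _ (Real.log_ne_zero_of_pos_of_ne_one
    (by norm_num) (by norm_num))]

theorem tendsto_comp_mul_rpow_inv_natCast {a : ℕ → ℝ} {c : ℝ} (ha : ∀ n, 0 ≤ a n)
    (hlim : Tendsto (fun n : ℕ => a n ^ (n : ℝ)⁻¹) atTop (𝓝 c)) {l : ℕ} (hl : l ≠ 0) :
    Tendsto (fun n : ℕ => a (n * l) ^ (n : ℝ)⁻¹) atTop (𝓝 (c ^ l)) := by
  refine ((hlim.comp (tendsto_id.atTop_mul_const' (Nat.pos_of_ne_zero hl))).pow l).congr fun n => ?_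
  rw [Function.comp_apply, ← Real.rpow_natCast, ← Real.rpow_mul (ha _), id, Nat.cast_mul, mul_inv,
    mul_assoc, inv_mul_cancel₀ (Nat.cast_ne_zero.2 hl), mul_one]

open scoped Matrix.Norms.Operator in
theorem MatrixNorm.exists_le_mul_norm {d : ℕ} (ν : MatrixNorm d) :
    ∃ C, 0 ≤ C ∧ ∀ A, ν.N A ≤ C * ‖A‖ := by
  refine ⟨∑ i, ∑ j, ν.N (Matrix.single i j 1),
    Finset.sum_nonneg fun i _ => Finset.sum_nonneg fun j _ => ν.nonneg _, fun A => ?_⟩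
  have hsum {ι : Type} (s : Finset ι) (f : ι → Matrix (Fin d) (Fin d) ℂ) :
      ν.N (∑ i ∈ s, f i) ≤ ∑ i ∈ s, ν.N (f i) :=
    Finset.le_sum_of_subadditive ν.N ((ν.definite 0).2 rfl).le ν.triangle s f
  have hentry (i j : Fin d) : ‖A i j‖ ≤ ‖A‖ :=
    (PiLp.norm_apply_le (WithLp.toLp 1 (A i)) j).trans
      (norm_le_pi_norm (fun i => WithLp.toLp 1 (A i)) i)
  nth_rw 1 [A.matrix_eq_sum_single]
  simp only [Finset.sum_mul]
  refine (hsum _ _).trans (Finset.sum_le_sum fun i _ => (hsum _ _).trans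
    (Finset.sum_le_sum fun j _ => ?_))
  rw [← mul_one (A i j), ← smul_eq_mul, ← Matrix.smul_single, ν.homog, mul_comm]
  exact mul_le_mul_of_nonneg_left (hentry i j) (ν.nonneg _)

section WordProd

variable {d K : ℕ} {S : Fin K → Matrix (Fin d) (Fin d) ℂ} {x y : ℕ → Fin K} {n : ℕ}

theorem shift_iterate_apply (a : ℕ) (x : ℕ → Fin K) (n : ℕ) : (shift K)^[a] x n = x (n + a) := by
  induction a generalizing x with
  | zero => rfl
  | succ a ih => rw [Function.iterate_succ_apply, ih, shift, add_assoc]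

theorem wordProd_eq_of_mem_cylinder (h : y ∈ PiNat.cylinder x n) :
    wordProd S y n = wordProd S x n := by
  simp only [wordProd, h _ (Fin.is_lt _)]

theorem wordProd_mem_closure (S : Fin K → Matrix (Fin d) (Fin d) ℂ) (x : ℕ → Fin K) (n : ℕ) :
    wordProd S x n ∈ Submonoid.closure (Set.range S) :=
  Submonoid.list_prod_mem _ fun A hA => by
    obtain ⟨t, rfl⟩ := (List.mem_ofFn' _ _).1 hA
    exact Submonoid.subset_closure ⟨_, rfl⟩

theorem wordProd_smul (S : Fin K → Matrix (Fin d) (Fin d) ℂ) (c : ℂ) (x : ℕ → Fin K) (n : ℕ) :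
    wordProd (c • S) x n = c ^ n • wordProd S x n := by
  simpa [wordProd, List.map_ofFn, Function.comp_def] using
    ((List.ofFn fun t : Fin n => S (x t)).smul_prod c).symm

theorem wordProd_add (S : Fin K → Matrix (Fin d) (Fin d) ℂ) (x : ℕ → Fin K) (a b : ℕ) :
    wordProd S x (a + b) = wordProd S x a * wordProd S ((shift K)^[a] x) b := by
  simp only [wordProd, List.ofFn_add, List.prod_append, shift_iterate_apply]
  simp [add_comm]

theorem wordProd_mul (S : Fin K → Matrix (Fin d) (Fin d) ℂ) (x : ℕ → Fin K) (L n : ℕ) :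
    wordProd S x (L * n) =
      ((List.range L).map fun j => wordProd S (((shift K)^[n])^[j] x) n).prod := by
  induction L with
  | zero => simp [wordProd]
  | succ L ih =>
    rw [List.prod_range_succ, ← ih, add_one_mul, wordProd_add, mul_comm L, Function.iterate_mul]

theorem IsPeriodic.iterate_shift (h : IsPeriodic x n) : (shift K)^[n] x = x :=
  funext fun t => (shift_iterate_apply n x t).trans (h.2 t)

theorem IsPeriodic.wordProd_mul_eq_pow (S : Fin K → Matrix (Fin d) (Fin d) ℂ)
    (h : IsPeriodic x n) (L : ℕ) : wordProd S x (L * n) = wordProd S x n ^ L := by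
  simp [wordProd_mul, Function.iterate_fixed h.iterate_shift]

open scoped Matrix.Norms.Operator in
theorem norm_finWordProd_le (S : Fin K → Matrix (Fin d) (Fin d) ℂ) (w : Fin n → Fin K)
    (hn : n ≠ 0) : ‖finWordProd S w‖ ≤ (∑ i, ‖S i‖) ^ n := by
  have hletter (i : Fin K) : ‖S i‖ ≤ ∑ i, ‖S i‖ :=
    Finset.single_le_sum (f := fun i => ‖S i‖) (fun i _ => norm_nonneg _) (Finset.mem_univ i)
  refine (List.norm_prod_le' (by simpa using hn)).trans ?_
  rw [List.map_ofFn, List.prod_ofFn]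
  simpa using Finset.prod_le_prod (fun t _ => norm_nonneg (S (w t)))
    fun t (_ : t ∈ Finset.univ) => hletter (w t)

end WordProd

theorem isLittleO_pow_of_spectralRadius_lt {A : Type*} [NormedRing A] [NormedAlgebra ℂ A]
    [CompleteSpace A] {a : A} {r : NNReal} (h : spectralRadius ℂ a < r) :
    (fun k : ℕ => a ^ k) =o[atTop] fun k : ℕ => (r : ℝ) ^ k := by
  obtain ⟨s, has, hsr⟩ := ENNReal.lt_iff_exists_nnreal_btwn.1 h
  refine Asymptotics.IsBigO.trans_isLittleO (Asymptotics.isBigO_iff.2 ⟨1, ?_⟩)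
    (isLittleO_pow_pow_of_lt_left s.coe_nonneg (ENNReal.coe_lt_coe.1 hsr))
  have hroot := spectrum.pow_nnnorm_pow_one_div_tendsto_nhds_spectralRadius a
  filter_upwards [hroot.eventually_lt_const has, eventually_ne_atTop 0] with k hk hk0
  rw [one_div, ENNReal.rpow_inv_lt_iff (by positivity), ENNReal.rpow_natCast] at hk
  rw [one_mul, Real.norm_of_nonneg (by positivity)]
  exact_mod_cast hk.le

open scoped Matrix.Norms.Operator in
theorem spectralRadius_le_nnnorm_matrix {n : Type*} [Fintype n] [DecidableEq n]
    (A : Matrix n n ℂ) : spectralRadius ℂ A ≤ ‖A‖₊ := by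
  rcases isEmpty_or_nonempty n
  · exact (spectrum.SpectralRadius.of_subsingleton A).trans_le zero_le
  · exact spectrum.spectralRadius_le_nnnorm A

section SpectralRadius

variable {d K : ℕ} {S : Fin K → Matrix (Fin d) (Fin d) ℂ} {x : ℕ → Fin K} {n : ℕ}

theorem specRad_nonneg (A : Matrix (Fin d) (Fin d) ℂ) : 0 ≤ specRad A :=
  ENNReal.toReal_nonneg

open scoped Matrix.Norms.Operator in
theorem specRad_le_norm (A : Matrix (Fin d) (Fin d) ℂ) : specRad A ≤ ‖A‖ :=
  ENNReal.toReal_mono ENNReal.coe_ne_top (spectralRadius_le_nnnorm_matrix A)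

open scoped Matrix.Norms.Operator in
theorem spectralRadius_ne_top (A : Matrix (Fin d) (Fin d) ℂ) : spectralRadius ℂ A ≠ ⊤ :=
  ((spectralRadius_le_nnnorm_matrix A).trans_lt ENNReal.coe_lt_top).ne

theorem norm_le_specRad_of_mem_spectrum {A : Matrix (Fin d) (Fin d) ℂ} {z : ℂ}
    (hz : z ∈ spectrum ℂ A) : ‖z‖ ≤ specRad A :=
  ENNReal.toReal_mono (spectralRadius_ne_top A)
    (le_iSup₂_of_le z hz le_rfl : (‖z‖₊ : ℝ≥0∞) ≤ spectralRadius ℂ A)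

theorem norm_trace_le_card_mul_specRad (A : Matrix (Fin d) (Fin d) ℂ) :
    ‖A.trace‖ ≤ d * specRad A := by
  have hroot : ∀ z ∈ A.charpoly.roots, ‖z‖ ≤ specRad A := fun z hz =>
    norm_le_specRad_of_mem_spectrum
      (Matrix.mem_spectrum_iff_isRoot_charpoly.2 (Polynomial.isRoot_of_mem_roots hz))
  have hcard : A.charpoly.roots.card ≤ d := by
    simpa [Matrix.charpoly_natDegree_eq_dim] using A.charpoly.card_roots'
  calc ‖A.trace‖ ≤ (A.charpoly.roots.map norm).sum := by
        rw [A.trace_eq_sum_roots_charpoly]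
        exact norm_multiset_sum_le _
    _ ≤ A.charpoly.roots.card * specRad A := by
        simpa using Multiset.sum_le_card_nsmul _ (specRad A) (Multiset.forall_mem_map_iff.2 hroot)
    _ ≤ d * specRad A := by gcongr; exact specRad_nonneg A

theorem specRad_pow_le (A : Matrix (Fin d) (Fin d) ℂ) {n : ℕ} (hn : n ≠ 0) :
    specRad A ^ n ≤ specRad (A ^ n) := by
  rw [specRad, ← ENNReal.toReal_pow]
  exact ENNReal.toReal_mono (spectralRadius_ne_top _) (spectrum.spectralRadius_pow_le A n hn)

open scoped Matrix.Norms.Operator in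
theorem tendsto_inv_smul_pow_of_specRad_lt {A : Matrix (Fin d) (Fin d) ℂ} {r : ℝ}
    (hr : specRad A < r) : Tendsto (fun k : ℕ => ((r : ℂ)⁻¹ • A) ^ k) atTop (𝓝 0) := by
  lift r to NNReal using (specRad_nonneg A).trans hr.le
  have hlt : spectralRadius ℂ A < r :=
    (ENNReal.toReal_lt_toReal (spectralRadius_ne_top A) ENNReal.coe_ne_top).1 hr
  refine tendsto_zero_iff_norm_tendsto_zero.2
    ((isLittleO_pow_of_spectralRadius_lt hlt).norm_left.tendsto_div_nhds_zero.congr fun k => ?_)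
  simp [smul_pow, norm_smul, div_eq_inv_mul]

theorem specRad_wordProd_rpow_inv_le (S : Fin K → Matrix (Fin d) (Fin d) ℂ) (x : ℕ → Fin K)
    (n : ℕ) : specRad (wordProd S x n) ^ (n : ℝ)⁻¹ ≤
      ⨆ w : Fin n → Fin K, specRad (finWordProd S w) ^ (n : ℝ)⁻¹ :=
  le_ciSup (f := fun w : Fin n → Fin K => specRad (finWordProd S w) ^ (n : ℝ)⁻¹)
    (Set.finite_range _).bddAbove fun t => x t

open scoped Matrix.Norms.Operator in
theorem isBoundedUnder_iSup_specRad (S : Fin K → Matrix (Fin d) (Fin d) ℂ) :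
    IsBoundedUnder (· ≤ ·) atTop fun n : ℕ =>
      ⨆ w : Fin n → Fin K, specRad (finWordProd S w) ^ (n : ℝ)⁻¹ := by
  have hB : 0 ≤ ∑ i, ‖S i‖ := by positivity
  refine isBoundedUnder_of_eventually_le (a := ∑ i, ‖S i‖) ?_
  filter_upwards [eventually_ne_atTop 0] with n hn
  refine Real.iSup_le (fun w => ?_) hB
  rw [Real.rpow_inv_le_iff_of_pos (specRad_nonneg _) hB (by positivity), Real.rpow_natCast]
  exact (specRad_le_norm _).trans (norm_finWordProd_le S w hn)

theorem IsPeriodic.specRad_wordProd_rpow_inv_le_genSpecRad (hx : IsPeriodic x n)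
    (S : Fin K → Matrix (Fin d) (Fin d) ℂ) :
    specRad (wordProd S x n) ^ (n : ℝ)⁻¹ ≤ genSpecRad S := by
  have hn : n ≠ 0 := Nat.one_le_iff_ne_zero.1 hx.1
  refine le_limsup_of_frequently_le (frequently_atTop.2 fun a =>
    ⟨(a + 1) * n, by nlinarith [hx.1], ?_⟩) (isBoundedUnder_iSup_specRad S)
  have hroot : specRad (wordProd S x n) ^ (n : ℝ)⁻¹ =
      (specRad (wordProd S x n) ^ (a + 1)) ^ (((a + 1) * n : ℕ) : ℝ)⁻¹ := by
    rw [Nat.cast_mul, mul_inv, Real.rpow_mul (pow_nonneg (specRad_nonneg _) _),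
      Real.pow_rpow_inv_natCast (specRad_nonneg _) a.succ_ne_zero]
  refine (hroot.trans_le ?_).trans (specRad_wordProd_rpow_inv_le S x _)
  rw [hx.wordProd_mul_eq_pow]
  exact Real.rpow_le_rpow (pow_nonneg (specRad_nonneg _) _) (specRad_pow_le _ a.succ_ne_zero)
    (by positivity)

theorem eq_one_or_exists_isPeriodic_of_mem_closure {t : Matrix (Fin d) (Fin d) ℂ}
    (ht : t ∈ Submonoid.closure (Set.range S)) :
    t = 1 ∨ ∃ x n, IsPeriodic x n ∧ wordProd S x n = t := by
  obtain ⟨l, hl, rfl⟩ := Submonoid.exists_list_of_mem_closure ht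
  obtain ⟨l, rfl⟩ : l ∈ Set.range (List.map S) := by rwa [Set.range_list_map]
  refine (eq_or_ne l []).imp (fun h => by simp [h]) fun h => ?_
  have hlen : 0 < l.length := List.length_pos_iff.2 h
  refine ⟨fun t => l[t % l.length]'(Nat.mod_lt t hlen), l.length,
    ⟨hlen, fun t => by simp⟩, ?_⟩
  exact congrArg List.prod (List.ext_getElem (by simp) fun i hi _ => by
    simp [Nat.mod_eq_of_lt (show i < l.length by simpa using hi)])

theorem hasTraceBound_closure_range_inv_smul {r : ℝ} (hr : 0 < r) (h : genSpecRad S ≤ r) :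
    HasTraceBound (Submonoid.closure (Set.range ((r : ℂ)⁻¹ • S))) 1 d := by
  intro t ht
  rw [mul_one]
  obtain rfl | ⟨x, n, hx, rfl⟩ := eq_one_or_exists_isPeriodic_of_mem_closure ht
  · simp
  have hle : specRad (wordProd S x n) ≤ r ^ n := by
    have := (hx.specRad_wordProd_rpow_inv_le_genSpecRad S).trans h
    rwa [Real.rpow_inv_le_iff_of_pos (specRad_nonneg _) hr.le (by exact_mod_cast hx.1),
      Real.rpow_natCast] at this
  calc ‖(wordProd ((r : ℂ)⁻¹ • S) x n).trace‖ = (r ^ n)⁻¹ * ‖(wordProd S x n).trace‖ := by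
        simp [wordProd_smul, Matrix.trace_smul, abs_of_pos hr]
    _ ≤ (r ^ n)⁻¹ * (d * r ^ n) := by
        gcongr
        exact (norm_trace_le_card_mul_specRad _).trans (by gcongr)
    _ = d := by field_simp

end SpectralRadius

section Growth

variable {d K : ℕ} {S : Fin K → Matrix (Fin d) (Fin d) ℂ} {x y : ℕ → Fin K} {n : ℕ} {D : ℝ}

open scoped Matrix.Norms.Operator in
/-- Every visit of the orbit of `y` to a long cylinder around `x` halves the trace bound. -/
theorem IsPeriodic.exists_norm_wordProd_le_mul_half_rpow (hx : IsPeriodic x n)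
    (hD : HasTraceBound (Submonoid.closure (Set.range S)) 1 D)
    (hlim : Tendsto (fun k : ℕ => wordProd S x n ^ k) atTop (𝓝 0)) :
    ∃ ℓ ≠ 0, ∃ (C : ℝ) (m : ℕ), ∀ y L,
      ‖wordProd S y (L * ℓ)‖ ≤ C * (L + 1) ^ m * (1 / 2) ^ birkhoffSum (shift K)^[ℓ]
        ((PiNat.cylinder x ℓ).indicator (1 : (ℕ → Fin K) → ℝ)) L y := by
  classical
  obtain ⟨k, hk, hk0⟩ := ((eventually_contractsTraces_pow (wordProd_mem_closure S x n) hlim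
    (half_pos one_pos)).and (eventually_ne_atTop 0)).exists
  rw [← hx.wordProd_mul_eq_pow] at hk
  have hℓ : k * n ≠ 0 := mul_ne_zero hk0 (Nat.one_le_iff_ne_zero.1 hx.1)
  set ℓ := k * n
  set χ : (ℕ → Fin K) → ℝ := (PiNat.cylinder x ℓ).indicator 1
  have hhalf (y) : (1 / 2 : ℝ) ≤ (1 / 2) ^ χ y := by
    by_cases hy : y ∈ PiNat.cylinder x ℓ <;> simp [χ, hy]; norm_num
  have hcontract (y) : ContractsTraces (Submonoid.closure (Set.range S)) (wordProd S y ℓ)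
      ((1 / 2) ^ χ y) := by
    by_cases hy : y ∈ PiNat.cylinder x ℓ
    · simpa [χ, hy, wordProd_eq_of_mem_cylinder hy] using hk
    · simpa [χ, hy] using contractsTraces_one_of_mem (wordProd_mem_closure S y ℓ)
  have hbound (y) : ‖wordProd S y ℓ‖ ≤ 2 * (∑ i, ‖S i‖) ^ ℓ * (1 / 2) ^ χ y := by
    have hle : ‖wordProd S y ℓ‖ ≤ (∑ i, ‖S i‖) ^ ℓ := norm_finWordProd_le S _ hℓ
    nlinarith [hhalf y, norm_nonneg (wordProd S y ℓ)]
  obtain ⟨C, m, hC⟩ := exists_norm_list_prod_le_of_contractsTraces hD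
    (wordProd_mem_closure S · ℓ) hcontract (by positivity) (fun y => by positivity) hbound
  refine ⟨ℓ, hℓ, C, m, fun y L => ?_⟩
  have hprod : ((List.range L).map fun j => (1 / 2 : ℝ) ^ χ (((shift K)^[ℓ])^[j] y)).prod =
      (1 / 2) ^ birkhoffSum (shift K)^[ℓ] χ L y := by
    rw [birkhoffSum, Real.rpow_sum_of_pos (by norm_num)]
    rfl
  have h := hC ((List.range L).map fun j => ((shift K)^[ℓ])^[j] y)
  rw [List.map_map, List.map_map, List.length_map, List.length_range] at h
  rw [wordProd_mul, ← hprod]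
  exact h

theorem IsPeriodic.exists_tendsto_birkhoffAverage_cylinder (hx : IsPeriodic x n)
    (hD : HasTraceBound (Submonoid.closure (Set.range S)) 1 D)
    (hlim : Tendsto (fun k : ℕ => wordProd S x n ^ k) atTop (𝓝 0)) (ν : MatrixNorm d) :
    ∃ ℓ, ∀ y, Tendsto (fun m : ℕ => ν.N (wordProd S y m) ^ (m : ℝ)⁻¹) atTop (𝓝 1) →
      Tendsto (fun L => birkhoffAverage ℝ (shift K)^[ℓ]
        ((PiNat.cylinder x ℓ).indicator (1 : (ℕ → Fin K) → ℝ)) L y) atTop (𝓝 0) := by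
  obtain ⟨ℓ, hℓ, C, m, hC⟩ := hx.exists_norm_wordProd_le_mul_half_rpow hD hlim
  obtain ⟨B, hB, hν⟩ := ν.exists_le_mul_norm
  refine ⟨ℓ, fun y hy => ?_⟩
  have hroot := tendsto_comp_mul_rpow_inv_natCast (fun j => ν.nonneg (wordProd S y j)) hy hℓ
  rw [one_pow] at hroot
  refine (tendsto_div_of_le_mul_half_rpow (C := B * C) (m := m) (fun L => ν.nonneg _)
    (fun L => ?_) hroot fun L => ?_).congr fun L => (div_eq_inv_mul _ _)
  · exact Finset.sum_nonneg fun j _ => Set.indicator_nonneg (fun _ _ => zero_le_one) _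
  · simpa only [mul_assoc] using (hν _).trans (mul_le_mul_of_nonneg_left (hC y L) hB)

theorem IsPeriodic.not_ae_tendsto_rpow_inv_one (hx : IsPeriodic x n)
    (hD : HasTraceBound (Submonoid.closure (Set.range S)) 1 D)
    (hlim : Tendsto (fun k : ℕ => wordProd S x n ^ k) atTop (𝓝 0)) (ν : MatrixNorm d)
    {μ : Measure (ℕ → Fin K)} [IsFiniteMeasure μ] (hμ : MeasurePreserving (shift K) μ μ)
    (hsupp : DensityPoint μ x) :
    ¬ ∀ᵐ y ∂μ, Tendsto (fun m : ℕ => ν.N (wordProd S y m) ^ (m : ℝ)⁻¹) atTop (𝓝 1) := by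
  intro hae
  obtain ⟨ℓ, hℓ⟩ := hx.exists_tendsto_birkhoffAverage_cylinder hD hlim ν
  have hopen : IsOpen (PiNat.cylinder x ℓ) := PiNat.isOpen_cylinder _ x ℓ
  have hint := integral_eq_of_tendsto_birkhoffAverage (g := 0) (b := 1) (hμ.iterate ℓ)
    (stronglyMeasurable_one.indicator hopen.measurableSet).aestronglyMeasurable
    (fun y => by simpa using norm_indicator_le_norm_self (1 : (ℕ → Fin K) → ℝ) y) (hae.mono hℓ)
  rw [integral_indicator_one hopen.measurableSet, Pi.zero_def, integral_zero,
    measureReal_eq_zero_iff] at hint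
  exact (hsupp _ hopen (PiNat.self_mem_cylinder x ℓ)).ne' hint

end Growth

theorem finiteness_of_fully_supported_extremal_measure_general {d K : ℕ}
    (S : Fin K → Matrix (Fin d) (Fin d) ℂ) (ν : MatrixNorm d) (μ : Measure (ℕ → Fin K))
    [IsFiniteMeasure μ] (hμ : MeasurePreserving (shift K) μ μ) (hext : IsExtremal S ν.N μ)
    {x : ℕ → Fin K} {n : ℕ} (hx : IsPeriodic x n) (hsupp : DensityPoint μ x) :
    genSpecRad S = specRad (wordProd S x n) ^ (n : ℝ)⁻¹ := by
  refine ((hx.specRad_wordProd_rpow_inv_le_genSpecRad S).eq_of_not_lt fun hlt => ?_).symm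
  set ρ := genSpecRad S
  have hρ : 0 < ρ := (Real.rpow_nonneg (specRad_nonneg _) _).trans_lt hlt
  have hlim : Tendsto (fun k : ℕ => wordProd ((ρ : ℂ)⁻¹ • S) x n ^ k) atTop (𝓝 0) := by
    rw [Real.rpow_inv_lt_iff_of_pos (specRad_nonneg _) hρ.le (by exact_mod_cast hx.1),
      Real.rpow_natCast] at hlt
    simpa [wordProd_smul] using tendsto_inv_smul_pow_of_specRad_lt hlt
  refine hx.not_ae_tendsto_rpow_inv_one (hasTraceBound_closure_range_inv_smul hρ le_rfl) hlim ν hμ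
    hsupp (hext.mono fun y hy => ?_)
  rw [← inv_mul_cancel₀ hρ.ne']
  refine (hy.const_mul ρ⁻¹).congr' ?_
  filter_upwards [eventually_ne_atTop 0] with m hm
  rw [wordProd_smul, ν.homog, Real.mul_rpow (norm_nonneg _) (ν.nonneg _), norm_pow,
    Real.pow_rpow_inv_natCast (norm_nonneg _) hm, norm_inv, Complex.norm_of_nonneg hρ.le]

/-- If some extremal ergodic probability measure for `S` has full support (every point of
`Σ_K^+` is a density point), then `S` has the spectral finiteness property. -/
theorem finiteness_of_fully_supported_extremal_measure
    {d K : ℕ} (hd : 2 ≤ d) (hK : 2 ≤ K)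
    (S : Fin K → Matrix (Fin d) (Fin d) ℂ) (ν : MatrixNorm d)
    (μ : Measure (ℕ → Fin K)) [IsProbabilityMeasure μ]
    (hergo : Ergodic (shift K) μ) (hext : IsExtremal S ν.N μ)
    (hsupp : ∀ x : ℕ → Fin K, DensityPoint μ x) :
    HasFinitenessProperty S :=
  ⟨1, le_rfl, fun _ => ⟨0, by omega⟩, finiteness_of_fully_supported_extremal_measure_general S ν μ
    hergo.toMeasurePreserving hext (x := fun _ => ⟨0, by omega⟩) ⟨le_rfl, fun _ => rfl⟩ (hsupp _)⟩
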